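/- Let c* ∈ B(0,M)^k be a fixed optimal codebook. Then for every δ > 0, E sup over c ∈ B(0,M)^k with ‖c − c*‖² ≤ δ/(16M²) of |(P − P_n)(γ(c,·) − γ(c*,·))| ≤ 4 √(π k δ) / √n, where P_n is the empirical measure of an i.i.d. n-sample from P. -/

import Mathlib

open MeasureTheory Metric

noncomputable section

variable {H : Type*} [NormedAddCommGroup H] [InnerProductSpace ℝ H] [MeasurableSpace H]

/-- `qgamma k c x = min_j ‖x - c j‖²`. -/
def qgamma (k : ℕ) (c : Fin k → H) (x : H) : ℝ := ⨅ j : Fin k, ‖x - c j‖ ^ 2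

/-- distortion (risk) of a codebook. -/
def qrisk (k : ℕ) (P : Measure H) (c : Fin k → H) : ℝ := ∫ x, qgamma k c x ∂P

/-- the set of optimal codebooks. -/
def qopt (k : ℕ) (P : Measure H) : Set (Fin k → H) :=
  {c | ∀ c' : Fin k → H, qrisk k P c ≤ qrisk k P c'}

/-- the `i`-th (closed) Voronoi cell of the codebook `c`. -/
def vcell (k : ℕ) (c : Fin k → H) (i : Fin k) : Set H :=
  {x | ∀ j : Fin k, ‖x - c i‖ ≤ ‖x - c j‖}

/-- `B`, the minimal separation between code points of optimal codebooks. -/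
def qB (k : ℕ) (P : Measure H) : ℝ :=
  sInf {b | ∃ c ∈ qopt k P, ∃ i j : Fin k, i ≠ j ∧ b = ‖c i - c j‖}

/-- `p_min`, the minimal mass of a Voronoi cell of an optimal codebook. -/
def qpmin (k : ℕ) (P : Measure H) : ℝ :=
  sInf {p | ∃ c ∈ qopt k P, ∃ i : Fin k, p = (P (vcell k c i)).toReal}

/-- `N_{c*}`, the union of the boundaries between Voronoi cells. -/
def nbd (k : ℕ) (c : Fin k → H) : Set H :=
  ⋃ (i : Fin k) (j : Fin k) (_ : i ≠ j), vcell k c i ∩ vcell k c j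

/-- the weight function `p(t)`, the maximal mass of the closed `t`-neighborhood
of `N_{c*}` over optimal codebooks `c*`. -/
def pweight (k : ℕ) (P : Measure H) (t : ℝ) : ℝ :=
  sSup {p | ∃ c ∈ qopt k P, p = (P (cthickening t (nbd k c))).toReal}

/-- `P` is `M`-bounded: its support is contained in the closed ball `B(0,M)`. -/
def mbounded (P : Measure H) (M : ℝ) : Prop := P (closedBall (0 : H) M)ᶜ = 0

/-- the support of `P` contains more than `k` points. -/
def suppGT (P : Measure H) (k : ℕ) : Prop :=
  ∀ S : Finset H, S.card ≤ k → P ((S : Set H)ᶜ) ≠ 0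

/-- the margin condition with radius `r0`. -/
def margin (k : ℕ) (P : Measure H) (M r0 : ℝ) : Prop :=
  0 < r0 ∧ mbounded P M ∧
    ∀ t : ℝ, 0 ≤ t → t ≤ r0 → pweight k P t ≤ qB k P * qpmin k P * t / (128 * M ^ 2)

/-!
A ghost sample and random signs replace the deviation by the Rademacher complexity of the class
`γ(c, ·) - γ(c*, ·)`. As a minimum, `γ(c, x) - γ(c', x)` is at most one of the `k` increments
`‖x - c_j‖² - ‖x - c'_j‖²`. This one-sided bound is enough to replace, one observation at a time,
the signed losses by signed sums of all `k` squared distances with independent signs, without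
losing a constant: for a random sign vector `e` and fixed weights `w`, `|w_j| ≤ 𝔼 |∑ i, e_i w_i|`,
while `e` and `-e` together bound a supremum over pairs `(c, c')` by two single suprema. Finally
`‖x - c‖² - ‖x - c*‖²` is a scalar product in `E × ℝ` of `(x, M)`, of squared norm at most `2M²`,
with a vector of squared norm at most `8 ‖c - c*‖²`, so that Cauchy-Schwarz and the second moment
of a signed sum give the bound.
-/

open scoped BigOperators RealInnerProductSpace

section Rademacher

variable {ι κ T : Type*} [Fintype ι] [DecidableEq ι] [Fintype κ]

lemma abs_int_units_smul (u : ℤˣ) (x : ℝ) : |u • x| = |x| := by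
  rcases Int.units_eq_one_or u with rfl | rfl <;> simp

lemma inner_int_units_smul_left {E : Type*} [NormedAddCommGroup E] [InnerProductSpace ℝ E]
    (u : ℤˣ) (x y : E) : ⟪u • x, y⟫ = u • ⟪x, y⟫ := by
  rcases Int.units_eq_one_or u with rfl | rfl <;> simp

lemma inner_int_units_smul_right {E : Type*} [NormedAddCommGroup E] [InnerProductSpace ℝ E]
    (u : ℤˣ) (x y : E) : ⟪x, u • y⟫ = u • ⟪x, y⟫ := by
  rcases Int.units_eq_one_or u with rfl | rfl <;> simp

lemma expect_signs_comp_neg (F : (ι → ℤˣ) → ℝ) : 𝔼 e, F (-e) = 𝔼 e, F e :=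
  Fintype.expect_equiv (Equiv.neg _) _ _ fun _ ↦ rfl

lemma expect_signs_mul_smul (i j : ι) (x : ℝ) :
    𝔼 e : ι → ℤˣ, (e i * e j) • x = if i = j then x else 0 := by
  split_ifs with hij
  · subst hij
    simp only [Int.units_mul_self, one_smul, Fintype.expect_const]
  · have flip_i : Function.Involutive fun e : ι → ℤˣ ↦ Function.update e i (-e i) := fun e ↦ by
      simp
    have odd : 𝔼 e : ι → ℤˣ, -((e i * e j) • x) = 𝔼 e : ι → ℤˣ, (e i * e j) • x :=
      Fintype.expect_bijective _ flip_i.bijective _ _ fun e ↦ by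
        simp [Function.update_of_ne (Ne.symm hij), Units.neg_smul]
    rw [Finset.expect_neg_distrib] at odd
    linarith

lemma abs_le_expect_abs_sum_signs_smul (w : ι → ℝ) (j : ι) :
    |w j| ≤ 𝔼 e : ι → ℤˣ, |∑ i, e i • w i| :=
  calc |w j| = |𝔼 e : ι → ℤˣ, e j • ∑ i, e i • w i| := by
        simp only [Finset.smul_sum, smul_smul, Finset.expect_sum_comm, expect_signs_mul_smul,
          Finset.sum_ite_eq, Finset.mem_univ, if_true]
    _ ≤ 𝔼 e : ι → ℤˣ, |e j • ∑ i, e i • w i| := Finset.abs_expect_le _ _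
    _ = 𝔼 e : ι → ℤˣ, |∑ i, e i • w i| := by simp only [abs_int_units_smul]

lemma expect_norm_sq_sum_signs_smul {E : Type*} [NormedAddCommGroup E] [InnerProductSpace ℝ E]
    (v : ι → E) : 𝔼 e : ι → ℤˣ, ‖∑ i, e i • v i‖ ^ 2 = ∑ i, ‖v i‖ ^ 2 := by
  simp only [← real_inner_self_eq_norm_sq, sum_inner, inner_sum, inner_int_units_smul_left,
    inner_int_units_smul_right, smul_smul, Finset.expect_sum_comm, expect_signs_mul_smul,
    Finset.sum_ite_eq, Finset.mem_univ, if_true]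

lemma expect_norm_sum_signs_smul_le {E : Type*} [NormedAddCommGroup E] [InnerProductSpace ℝ E]
    (v : ι → E) : 𝔼 e : ι → ℤˣ, ‖∑ i, e i • v i‖ ≤ √(∑ i, ‖v i‖ ^ 2) := by
  apply Real.le_sqrt_of_sq_le
  have cauchy_schwarz := Finset.expect_mul_sq_le_sq_mul_sq Finset.univ
    (fun e : ι → ℤˣ ↦ ‖∑ i, e i • v i‖) 1
  simpa only [Pi.one_apply, mul_one, one_pow, Fintype.expect_const, expect_norm_sq_sum_signs_smul]
    using cauchy_schwarz

/-- The (unnormalised) Rademacher complexity of the functions `t ↦ h i t`: the mean, over uniform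
signs `e`, of the supremum over `t` of the signed sum. Signs are encoded as units of `ℤ`. -/
def radComplexity (h : ι → T → ℝ) : ℝ := 𝔼 e : ι → ℤˣ, ⨆ t, ∑ i, e i • h i t

/-- The variant of `radComplexity` where the signed sums are taken in absolute value, which is the
quantity produced by symmetrization. -/
def absRadComplexity (h : ι → T → ℝ) : ℝ := 𝔼 e : ι → ℤˣ, ⨆ t, |∑ i, e i • h i t|

lemma absRadComplexity_le_two_mul [Nonempty T] {h : ι → T → ℝ}
    (hbdd : ∀ e : ι → ℤˣ, BddAbove (Set.range fun t ↦ ∑ i, e i • h i t))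
    {t₀ : T} (h₀ : ∀ i, h i t₀ = 0) : absRadComplexity h ≤ 2 * radComplexity h := by
  set S : (ι → ℤˣ) → ℝ := fun e ↦ ⨆ t, ∑ i, e i • h i t
  have le_S e t : ∑ i, e i • h i t ≤ S e := le_ciSup (hbdd e) t
  have S_nonneg e : 0 ≤ S e := by simpa only [h₀, smul_zero, Finset.sum_const_zero] using le_S e t₀
  have abs_le e : ⨆ t, |∑ i, e i • h i t| ≤ S e + S (-e) := ciSup_le fun t ↦ by
    have neg_le := le_S (-e) t
    simp only [Pi.neg_apply, Units.neg_smul, Finset.sum_neg_distrib] at neg_le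
    rw [abs_le']
    constructor <;> linarith [le_S e t, S_nonneg e, S_nonneg (-e)]
  calc absRadComplexity h ≤ 𝔼 e, (S e + S (-e)) := Finset.expect_le_expect fun e _ ↦ abs_le e
    _ = 2 * radComplexity h := by
        rw [Finset.expect_add_distrib, expect_signs_comp_neg, ← two_mul]; rfl

lemma add_add_sub_le_two_mul_expect_iSup [DecidableEq κ] {A h : T → ℝ} {f : κ → T → ℝ}
    (hbdd : ∀ e : κ → ℤˣ, BddAbove (Set.range fun t ↦ A t + ∑ j, e j • f j t))
    (hf : ∀ t t', ∃ j, h t - h t' ≤ |f j t - f j t'|) (t t' : T) :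
    (A t + h t) + (A t' - h t') ≤ 2 * 𝔼 e : κ → ℤˣ, ⨆ t, (A t + ∑ j, e j • f j t) := by
  set S : (κ → ℤˣ) → ℝ := fun e ↦ ⨆ t, (A t + ∑ j, e j • f j t)
  have le_S e t : A t + ∑ j, e j • f j t ≤ S e := le_ciSup (hbdd e) t
  have pair_le e : A t + A t' + |∑ j, e j • (f j t - f j t')| ≤ S e + S (-e) := by
    have neg_le t := le_S (-e) t
    simp only [Pi.neg_apply, Units.neg_smul, Finset.sum_neg_distrib] at neg_le
    simp only [smul_sub, Finset.sum_sub_distrib]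
    rw [← le_sub_iff_add_le', abs_le']
    constructor <;> linarith [le_S e t, le_S e t', neg_le t, neg_le t']
  obtain ⟨j, hj⟩ := hf t t'
  calc (A t + h t) + (A t' - h t') ≤ A t + A t' + |f j t - f j t'| := by linarith
    _ ≤ A t + A t' + 𝔼 e : κ → ℤˣ, |∑ j, e j • (f j t - f j t')| := by
        gcongr
        exact abs_le_expect_abs_sum_signs_smul (fun j ↦ f j t - f j t') j
    _ = 𝔼 e : κ → ℤˣ, (A t + A t' + |∑ j, e j • (f j t - f j t')|) := by
        rw [Finset.expect_add_distrib, Fintype.expect_const]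
    _ ≤ 𝔼 e, (S e + S (-e)) := Finset.expect_le_expect fun e _ ↦ pair_le e
    _ = 2 * 𝔼 e, S e := by rw [Finset.expect_add_distrib, expect_signs_comp_neg, two_mul]

lemma bddAbove_range_add_sign_smul {A h : T → ℝ} {f : κ → T → ℝ}
    (hbdd : ∀ e : κ → ℤˣ, BddAbove (Set.range fun t ↦ A t + ∑ j, e j • f j t))
    (hf : ∀ t t', ∃ j, h t - h t' ≤ |f j t - f j t'|) (u : ℤˣ) :
    BddAbove (Set.range fun t ↦ A t + u • h t) := by
  rcases isEmpty_or_nonempty T with _ | ⟨⟨t₀⟩⟩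
  · simp [Set.range_eq_empty]
  classical
  have key := add_add_sub_le_two_mul_expect_iSup hbdd hf
  refine ⟨2 * (𝔼 e : κ → ℤˣ, ⨆ t, (A t + ∑ j, e j • f j t)) - (A t₀ - u • h t₀), ?_⟩
  rintro _ ⟨t, rfl⟩
  rcases Int.units_eq_one_or u with rfl | rfl <;> simp only [Units.neg_smul, one_smul]
  · linarith [key t t₀]
  · linarith [key t₀ t]

lemma expect_iSup_add_sign_smul_le [DecidableEq κ] [Nonempty T] {A h : T → ℝ} {f : κ → T → ℝ}
    (hbdd : ∀ e : κ → ℤˣ, BddAbove (Set.range fun t ↦ A t + ∑ j, e j • f j t))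
    (hf : ∀ t t', ∃ j, h t - h t' ≤ |f j t - f j t'|) :
    𝔼 u : ℤˣ, ⨆ t, (A t + u • h t) ≤ 𝔼 e : κ → ℤˣ, ⨆ t, (A t + ∑ j, e j • f j t) := by
  set B := 𝔼 e : κ → ℤˣ, ⨆ t, (A t + ∑ j, e j • f j t)
  have average : 𝔼 u : ℤˣ, ⨆ t, (A t + u • h t) =
      ((⨆ t, (A t + h t)) + ⨆ t, (A t - h t)) / 2 := by
    rw [Fintype.expect_eq_sum_div_card]
    simp [sub_eq_add_neg, Units.neg_smul]
  have sup_le : (⨆ t, (A t + h t)) ≤ 2 * B - ⨆ t', (A t' - h t') :=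
    ciSup_le fun t ↦ le_sub_comm.1 <| ciSup_le fun t' ↦
      le_sub_iff_add_le'.2 (add_add_sub_le_two_mul_expect_iSup hbdd hf t t')
  linarith

lemma expect_fin_succ {S : Type*} [Fintype S] {n : ℕ} (F : (Fin (n + 1) → S) → ℝ) :
    𝔼 e, F e = 𝔼 u : S, 𝔼 e : Fin n → S, F (Fin.cons u e) := by
  rw [← Finset.expect_product', Finset.univ_product_univ]
  exact (Fintype.expect_equiv (Fin.consEquiv fun _ ↦ S) _ _ fun _ ↦ rfl).symm

theorem expect_iSup_add_sum_sign_smul_le [DecidableEq κ] [Nonempty T] {n : ℕ} (A : T → ℝ)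
    (h : Fin n → T → ℝ) (f : Fin n → κ → T → ℝ)
    (hbdd : ∀ e : Fin n → κ → ℤˣ,
      BddAbove (Set.range fun t ↦ A t + ∑ i, ∑ j, e i j • f i j t))
    (hf : ∀ i t t', ∃ j, h i t - h i t' ≤ |f i j t - f i j t'|) :
    𝔼 e : Fin n → ℤˣ, ⨆ t, (A t + ∑ i, e i • h i t) ≤
      𝔼 e : Fin n → κ → ℤˣ, ⨆ t, (A t + ∑ i, ∑ j, e i j • f i j t) := by
  induction n generalizing A with
  | zero => simp
  | succ n ih =>
    have bdd_cons (e : Fin n → κ → ℤˣ) (u : κ → ℤˣ) : BddAbove (Set.range fun t ↦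
        (A t + ∑ i, ∑ j, e i j • f i.succ j t) + ∑ j, u j • f 0 j t) := by
      simpa only [Fin.sum_univ_succ, Fin.cons_zero, Fin.cons_succ, ← add_assoc, add_right_comm]
        using hbdd (Fin.cons u e)
    simp only [expect_fin_succ, Fin.sum_univ_succ, Fin.cons_zero, Fin.cons_succ, ← add_assoc]
    calc 𝔼 u : ℤˣ, 𝔼 e : Fin n → ℤˣ, ⨆ t, (A t + u • h 0 t + ∑ i, e i • h i.succ t)
        ≤ 𝔼 u : ℤˣ, 𝔼 e : Fin n → κ → ℤˣ,
            ⨆ t, (A t + u • h 0 t + ∑ i, ∑ j, e i j • f i.succ j t) :=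
          Finset.expect_le_expect fun u _ ↦
            ih _ _ _ (fun e ↦ by
              simpa only [add_right_comm] using
                bddAbove_range_add_sign_smul (bdd_cons e) (hf 0) u) fun i ↦ hf i.succ
      _ = 𝔼 e : Fin n → κ → ℤˣ, 𝔼 u : ℤˣ,
            ⨆ t, (A t + ∑ i, ∑ j, e i j • f i.succ j t + u • h 0 t) := by
          rw [Finset.expect_comm]
          simp only [add_right_comm]
      _ ≤ 𝔼 e : Fin n → κ → ℤˣ, 𝔼 u : κ → ℤˣ,
            ⨆ t, (A t + ∑ i, ∑ j, e i j • f i.succ j t + ∑ j, u j • f 0 j t) :=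
          Finset.expect_le_expect fun e _ ↦ expect_iSup_add_sign_smul_le (bdd_cons e) (hf 0)
      _ = 𝔼 u : κ → ℤˣ, 𝔼 e : Fin n → κ → ℤˣ,
            ⨆ t, (A t + ∑ j, u j • f 0 j t + ∑ i, ∑ j, e i j • f i.succ j t) := by
          rw [Finset.expect_comm]
          simp only [add_right_comm]

theorem radComplexity_le_of_forall_exists_sub_le [DecidableEq κ] [Nonempty T] {n : ℕ}
    {h : Fin n → T → ℝ} {f : Fin n × κ → T → ℝ}
    (hbdd : ∀ e : Fin n × κ → ℤˣ, BddAbove (Set.range fun t ↦ ∑ p, e p • f p t))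
    (hf : ∀ i t t', ∃ j, h i t - h i t' ≤ |f (i, j) t - f (i, j) t'|) :
    radComplexity h ≤ radComplexity f := by
  have curried := expect_iSup_add_sum_sign_smul_le 0 h (fun i j ↦ f (i, j))
    (fun e ↦ by simpa [Fintype.sum_prod_type] using hbdd (fun p ↦ e p.1 p.2)) hf
  simp only [Pi.zero_apply, zero_add] at curried
  refine curried.trans_eq (Fintype.expect_equiv (Equiv.curry (Fin n) κ ℤˣ).symm _ _ fun e ↦ ?_)
  simp only [Fintype.sum_prod_type]
  rfl

end Rademacher

section LinearClass

variable {ι κ T E : Type*} [Fintype ι] [Fintype κ] [Nonempty T]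
  [NormedAddCommGroup E] [InnerProductSpace ℝ E]

lemma sum_signs_smul_inner_le {a : E} {R : ℝ} (ha : ‖a‖ ≤ R) (v : ι → E) (e : ι → ℤˣ) :
    ∑ i, e i • ⟪v i, a⟫ ≤ R * ‖∑ i, e i • v i‖ :=
  calc ∑ i, e i • ⟪v i, a⟫ = ⟪∑ i, e i • v i, a⟫ := by
        simp only [sum_inner, inner_int_units_smul_left]
    _ ≤ ‖∑ i, e i • v i‖ * ‖a‖ := real_inner_le_norm _ _
    _ ≤ R * ‖∑ i, e i • v i‖ := by rw [mul_comm]; gcongr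

lemma radComplexity_inner_le [DecidableEq ι] {a : T → E} {R : ℝ} (ha : ∀ t, ‖a t‖ ≤ R)
    (v : ι → E) :
    radComplexity (fun i t ↦ ⟪v i, a t⟫) ≤ R * √(∑ i, ‖v i‖ ^ 2) := by
  have R_nonneg : 0 ≤ R := (norm_nonneg _).trans (ha (Classical.arbitrary T))
  calc radComplexity (fun i t ↦ ⟪v i, a t⟫) ≤ 𝔼 e : ι → ℤˣ, R * ‖∑ i, e i • v i‖ :=
        Finset.expect_le_expect fun e _ ↦ ciSup_le fun t ↦ sum_signs_smul_inner_le (ha t) v e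
    _ = R * 𝔼 e : ι → ℤˣ, ‖∑ i, e i • v i‖ := (Finset.mul_expect _ _ _).symm
    _ ≤ R * √(∑ i, ‖v i‖ ^ 2) := by
        gcongr
        exact expect_norm_sum_signs_smul_le v

theorem radComplexity_le_of_sub_le_abs_inner {n : ℕ} {h : Fin n → T → ℝ} (v : Fin n → E)
    (a : T → κ → E) {ρ : ℝ} (ha : ∀ t, ∑ j, ‖a t j‖ ^ 2 ≤ ρ)
    (hh : ∀ i t t', ∃ j, h i t - h i t' ≤ |⟪v i, a t j⟫ - ⟪v i, a t' j⟫|) :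
    radComplexity h ≤ √ρ * √(Fintype.card κ * ∑ i, ‖v i‖ ^ 2) := by
  classical
  -- The blocks are put side by side in the Hilbert sum, where a single Cauchy-Schwarz suffices.
  let b t : PiLp 2 fun _ : κ ↦ E := WithLp.toLp 2 (a t)
  let w (p : Fin n × κ) : PiLp 2 fun _ : κ ↦ E := PiLp.single 2 p.2 (v p.1)
  have norm_b t : ‖b t‖ ≤ √ρ := by
    rw [PiLp.norm_eq_of_L2]
    exact Real.sqrt_le_sqrt (ha t)
  have inner_w_b p t : ⟪w p, b t⟫ = ⟪v p.1, a t p.2⟫ := by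
    rw [PiLp.inner_apply, Finset.sum_eq_single p.2]
    · simp [w, b]
    · intro j _ hj
      simp [w, hj]
    · simp
  have sum_norm_w : ∑ p, ‖w p‖ ^ 2 = Fintype.card κ * ∑ i, ‖v i‖ ^ 2 := by
    simp [w, Fintype.sum_prod_type, Finset.mul_sum]
  rw [← sum_norm_w]
  refine (radComplexity_le_of_forall_exists_sub_le (fun e ↦ ?_) fun i t t' ↦ ?_).trans
    (radComplexity_inner_le norm_b w)
  · exact ⟨_, Set.forall_mem_range.2 fun t ↦ sum_signs_smul_inner_le (norm_b t) w e⟩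
  · simpa only [inner_w_b] using hh i t t'

end LinearClass

section Symmetrization

variable {ι T Ω : Type*} [Fintype ι]

lemma abs_sum_signs_smul_le {a : ι → ℝ} {C : ℝ} (ha : ∀ i, |a i| ≤ C) (e : ι → ℤˣ) :
    |∑ i, e i • a i| ≤ Fintype.card ι * C :=
  calc |∑ i, e i • a i| ≤ ∑ i, |e i • a i| := Finset.abs_sum_le_sum_abs _ _
    _ ≤ ∑ _i : ι, C := Finset.sum_le_sum fun i _ ↦ (abs_int_units_smul _ _).trans_le (ha i)
    _ = Fintype.card ι * C := by simp

lemma bddAbove_range_abs_sum_signs_smul {h : ι → T → ℝ} {C : ℝ} (hh : ∀ i t, |h i t| ≤ C)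
    (e : ι → ℤˣ) : BddAbove (Set.range fun t ↦ |∑ i, e i • h i t|) :=
  ⟨_, Set.forall_mem_range.2 fun t ↦ abs_sum_signs_smul_le (hh · t) e⟩

/-- The supremum over the class `g` of the signed difference between a sample, the first
components of `z`, and an independent copy of it (the ghost sample), the second components. -/
def ghostDeviation (g : T → Ω → ℝ) (e : ι → ℤˣ) (z : ι → Ω × Ω) : ℝ :=
  ⨆ t, |∑ i, e i • (g t (z i).1 - g t (z i).2)|

lemma ghostDeviation_nonneg (g : T → Ω → ℝ) (e : ι → ℤˣ) (z : ι → Ω × Ω) :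
    0 ≤ ghostDeviation g e z :=
  Real.iSup_nonneg fun _ ↦ abs_nonneg _

lemma abs_sub_le_two_mul {a b C : ℝ} (ha : |a| ≤ C) (hb : |b| ≤ C) : |a - b| ≤ 2 * C := by
  linarith [abs_sub a b]

lemma le_ghostDeviation {g : T → Ω → ℝ} {C : ℝ} {z : ι → Ω × Ω}
    (hz : ∀ i t, |g t (z i).1| ≤ C ∧ |g t (z i).2| ≤ C) (e : ι → ℤˣ) (t : T) :
    |∑ i, e i • (g t (z i).1 - g t (z i).2)| ≤ ghostDeviation g e z :=
  le_ciSup (f := fun t ↦ |∑ i, e i • (g t (z i).1 - g t (z i).2)|)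
    (bddAbove_range_abs_sum_signs_smul
      (fun i t ↦ abs_sub_le_two_mul (hz i t).1 (hz i t).2) e) t

lemma ghostDeviation_le {g : T → Ω → ℝ} {C : ℝ} (hC : 0 ≤ C) {z : ι → Ω × Ω}
    (hz : ∀ i t, |g t (z i).1| ≤ C ∧ |g t (z i).2| ≤ C) (e : ι → ℤˣ) :
    ghostDeviation g e z ≤ Fintype.card ι * (2 * C) :=
  Real.iSup_le (fun t ↦ abs_sum_signs_smul_le
    (fun i ↦ abs_sub_le_two_mul (hz i t).1 (hz i t).2) e) (by positivity)

lemma expect_ghostDeviation_le [DecidableEq ι] {g : T → Ω → ℝ} {C : ℝ} {z : ι → Ω × Ω}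
    (hz : ∀ i t, |g t (z i).1| ≤ C ∧ |g t (z i).2| ≤ C) :
    𝔼 e : ι → ℤˣ, ghostDeviation g e z ≤
      absRadComplexity (fun i t ↦ g t (z i).1) + absRadComplexity (fun i t ↦ g t (z i).2) := by
  simp only [absRadComplexity, ← Finset.expect_add_distrib]
  refine Finset.expect_le_expect fun e _ ↦ ?_
  have le_sup {h : ι → T → ℝ} (hh : ∀ i t, |h i t| ≤ C) t :
      |∑ i, e i • h i t| ≤ ⨆ t, |∑ i, e i • h i t| :=
    le_ciSup (f := fun t ↦ |∑ i, e i • h i t|) (bddAbove_range_abs_sum_signs_smul hh e) t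
  refine Real.iSup_le (fun t ↦ ?_) ?_
  · simp only [smul_sub, Finset.sum_sub_distrib]
    exact (abs_sub _ _).trans
      (add_le_add (le_sup (fun i t ↦ (hz i t).1) t) (le_sup (fun i t ↦ (hz i t).2) t))
  · exact add_nonneg (Real.iSup_nonneg fun _ ↦ abs_nonneg _) (Real.iSup_nonneg fun _ ↦ abs_nonneg _)

lemma ghostDeviation_one_swap (g : T → Ω → ℝ) (e : ι → ℤˣ) (z : ι → Ω × Ω) :
    ghostDeviation g 1 (fun i ↦ if e i = 1 then z i else (z i).swap) = ghostDeviation g e z := by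
  unfold ghostDeviation
  congr! 4 with t i
  rcases Int.units_eq_one_or (e i) with h | h <;> simp [h, Units.neg_smul]

variable [MeasurableSpace Ω]

lemma integral_comp_of_measurePreserving {Ω' : Type*} [MeasurableSpace Ω'] {μ : Measure Ω}
    {ν : Measure Ω'} {φ : Ω → Ω'} (hφ : MeasurePreserving φ μ ν) {F : Ω' → ℝ}
    (hF : AEStronglyMeasurable F ν) : ∫ x, F (φ x) ∂μ = ∫ y, F y ∂ν := by
  rw [← hφ.map_eq] at hF ⊢
  exact (integral_map hφ.aemeasurable hF).symm

lemma measurable_iSup_of_continuous [TopologicalSpace T] [TopologicalSpace.SeparableSpace T]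
    {F : T → Ω → ℝ} (hcont : ∀ ω, Continuous fun t ↦ F t ω) (hmeas : ∀ t, Measurable (F t)) :
    Measurable fun ω ↦ ⨆ t, F t ω := by
  obtain ⟨S, S_countable, S_dense⟩ := TopologicalSpace.exists_countable_dense T
  have := S_countable.to_subtype
  simp only [← S_dense.ciSup' (hcont _)]
  exact Measurable.iSup fun t : S ↦ hmeas t

lemma ae_pi_forall_of_ae {P : Measure Ω} [SigmaFinite P] {p : Ω → Prop}
    (hp : ∀ᵐ x ∂P, p x) : ∀ᵐ ω ∂Measure.pi fun _ : ι ↦ P, ∀ i, p (ω i) :=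
  ae_all_iff.2 fun i ↦ (Measure.quasiMeasurePreserving_eval (fun _ ↦ P) i).ae hp

lemma measurePreserving_pi_swap (P : Measure Ω) [SigmaFinite P] (e : ι → ℤˣ) :
    MeasurePreserving (fun (z : ι → Ω × Ω) i ↦ if e i = 1 then z i else (z i).swap)
      (Measure.pi fun _ ↦ P.prod P) (Measure.pi fun _ ↦ P.prod P) := by
  refine measurePreserving_pi _ _ (f := fun i (x : Ω × Ω) ↦ if e i = 1 then x else x.swap)
    fun i ↦ ?_
  split_ifs
  · exact MeasurePreserving.id _
  · exact Measure.measurePreserving_swap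

/-- A family of measurable functions, continuous in its index and uniformly bounded by `C` almost
everywhere: the classes to which symmetrization is applied. Continuity in the index makes suprema
over a separable index space measurable. -/
structure IsBoundedClass [TopologicalSpace T] (P : Measure Ω) (g : T → Ω → ℝ) (C : ℝ) : Prop where
  continuous_index : ∀ x, Continuous fun t ↦ g t x
  measurable : ∀ t, Measurable (g t)
  ae_abs_le : ∀ᵐ x ∂P, ∀ t, |g t x| ≤ C

namespace IsBoundedClass

variable [TopologicalSpace T] {P : Measure Ω} {g : T → Ω → ℝ} {C : ℝ}

section Measurability

variable [TopologicalSpace.SeparableSpace T]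

lemma measurable_absRadComplexity [DecidableEq ι] (hg : IsBoundedClass P g C) :
    Measurable fun ω : ι → Ω ↦ absRadComplexity fun i t ↦ g t (ω i) := by
  unfold absRadComplexity
  simp only [Fintype.expect_eq_sum_div_card]
  refine (Finset.measurable_sum _ fun e _ ↦ measurable_iSup_of_continuous (fun ω ↦ ?_)
    fun t ↦ ?_).div_const _
  · exact (continuous_finsetSum _ fun i _ ↦ (hg.continuous_index _).const_smul _).abs
  · have := hg.measurable t
    fun_prop

lemma measurable_ghostDeviation (hg : IsBoundedClass P g C) (e : ι → ℤˣ) :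
    Measurable (ghostDeviation g e) := by
  refine measurable_iSup_of_continuous (fun z ↦ ?_) fun t ↦ ?_
  · exact (continuous_finsetSum _ fun i _ ↦
      ((hg.continuous_index _).sub (hg.continuous_index _)).const_smul _).abs
  · have := hg.measurable t
    fun_prop

end Measurability

variable [IsProbabilityMeasure P]

lemma ae_pi_abs_le (hg : IsBoundedClass P g C) :
    ∀ᵐ z ∂Measure.pi fun _ : ι ↦ P.prod P, ∀ i t, |g t (z i).1| ≤ C ∧ |g t (z i).2| ≤ C := by
  have bound_prod : ∀ᵐ z ∂P.prod P, ∀ t, |g t z.1| ≤ C ∧ |g t z.2| ≤ C := by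
    filter_upwards [measurePreserving_fst.quasiMeasurePreserving.ae hg.ae_abs_le,
      measurePreserving_snd.quasiMeasurePreserving.ae hg.ae_abs_le] with z h₁ h₂ t
    exact ⟨h₁ t, h₂ t⟩
  exact ae_pi_forall_of_ae bound_prod

lemma bound_nonneg [Nonempty T] (hg : IsBoundedClass P g C) : 0 ≤ C := by
  obtain ⟨x, hx⟩ := hg.ae_abs_le.exists
  exact (abs_nonneg _).trans (hx (Classical.arbitrary T))

lemma integrable (hg : IsBoundedClass P g C) (t : T) : Integrable (g t) P :=
  .of_bound (hg.measurable t).aestronglyMeasurable C (hg.ae_abs_le.mono fun _ hx ↦ hx t)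

lemma integrable_comp_eval (hg : IsBoundedClass P g C) (t : T) (i : ι) :
    Integrable (fun ω : ι → Ω ↦ g t (ω i)) (Measure.pi fun _ ↦ P) :=
  (measurePreserving_eval (fun _ : ι ↦ P) i).integrable_comp_of_integrable (hg.integrable t)

lemma integral_comp_eval (hg : IsBoundedClass P g C) (t : T) (i : ι) :
    ∫ ω : ι → Ω, g t (ω i) ∂(Measure.pi fun _ ↦ P) = ∫ x, g t x ∂P :=
  integral_comp_of_measurePreserving (measurePreserving_eval (fun _ ↦ P) i)
    (hg.measurable t).aestronglyMeasurable

lemma integral_sum_sub (hg : IsBoundedClass P g C) (t : T) (ω : ι → Ω) :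
    ∫ y : ι → Ω, ∑ i, (g t (ω i) - g t (y i)) ∂(Measure.pi fun _ ↦ P) =
      ∑ i, (g t (ω i) - ∫ x, g t x ∂P) := by
  have int_sub i : Integrable (fun y : ι → Ω ↦ g t (ω i) - g t (y i)) (.pi fun _ ↦ P) :=
    (integrable_const _).sub (hg.integrable_comp_eval t i)
  rw [integral_finsetSum _ fun i _ ↦ int_sub i]
  refine Finset.sum_congr rfl fun i _ ↦ ?_
  rw [integral_sub (integrable_const _) (hg.integrable_comp_eval t i), hg.integral_comp_eval]
  simp

variable [TopologicalSpace.SeparableSpace T]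

lemma integral_ghostDeviation_eq_one (hg : IsBoundedClass P g C) (e : ι → ℤˣ) :
    ∫ z, ghostDeviation g e z ∂(Measure.pi fun _ : ι ↦ P.prod P) =
      ∫ z, ghostDeviation g 1 z ∂(Measure.pi fun _ : ι ↦ P.prod P) := by
  simp only [← ghostDeviation_one_swap g e]
  exact integral_comp_of_measurePreserving (measurePreserving_pi_swap P e)
    (hg.measurable_ghostDeviation 1).aestronglyMeasurable

variable [Nonempty T]

lemma integrable_ghostDeviation (hg : IsBoundedClass P g C) (e : ι → ℤˣ) :
    Integrable (ghostDeviation g e) (.pi fun _ : ι ↦ P.prod P) := by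
  refine .of_bound (hg.measurable_ghostDeviation e).aestronglyMeasurable
    (Fintype.card ι * (2 * C)) ?_
  filter_upwards [hg.ae_pi_abs_le] with z hz
  rw [Real.norm_of_nonneg (ghostDeviation_nonneg g e z)]
  exact ghostDeviation_le hg.bound_nonneg hz e

lemma integral_iSup_abs_le_integral_ghostDeviation (hg : IsBoundedClass P g C) :
    ∫ ω : ι → Ω, (⨆ t, |∑ i, (g t (ω i) - ∫ x, g t x ∂P)|) ∂(Measure.pi fun _ ↦ P) ≤
      ∫ z, ghostDeviation g 1 z ∂(Measure.pi fun _ : ι ↦ P.prod P) := by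
  let pair (ω y : ι → Ω) (i : ι) : Ω × Ω := (ω i, y i)
  have pairing := measurePreserving_arrowProdEquivProdArrow Ω Ω ι (fun _ ↦ P) (fun _ ↦ P)
  have int_pair : Integrable (fun p : (ι → Ω) × (ι → Ω) ↦ ghostDeviation g 1 (pair p.1 p.2))
      ((Measure.pi fun _ ↦ P).prod (.pi fun _ ↦ P)) :=
    pairing.symm.integrable_comp_of_integrable (hg.integrable_ghostDeviation 1)
  have integral_pair : ∫ ω, ∫ y, ghostDeviation g 1 (pair ω y) ∂(Measure.pi fun _ ↦ P)
      ∂(Measure.pi fun _ ↦ P) = ∫ z, ghostDeviation g 1 z ∂(Measure.pi fun _ : ι ↦ P.prod P) := by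
    rw [← integral_prod _ int_pair]
    exact pairing.symm.integral_comp' _
  rw [← integral_pair]
  have bound_pair : ∀ᵐ ω ∂Measure.pi fun _ ↦ P, ∀ᵐ y ∂Measure.pi fun _ ↦ P,
      ∀ i t, |g t (pair ω y i).1| ≤ C ∧ |g t (pair ω y i).2| ≤ C :=
    Measure.ae_ae_of_ae_prod (pairing.symm.quasiMeasurePreserving.ae hg.ae_pi_abs_le)
  refine integral_mono_of_nonneg (.of_forall fun _ ↦ Real.iSup_nonneg fun _ ↦ abs_nonneg _)
    int_pair.integral_prod_left ?_
  filter_upwards [bound_pair, int_pair.prod_right_ae] with ω bound_ω int_ω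
  refine ciSup_le fun t ↦ ?_
  rw [← hg.integral_sum_sub t ω]
  refine (abs_integral_le_integral_abs).trans
    (integral_mono_of_nonneg (.of_forall fun _ ↦ abs_nonneg _) int_ω ?_)
  filter_upwards [bound_ω] with y bound_y
  simpa only [Pi.one_apply, one_smul] using le_ghostDeviation bound_y 1 t

lemma integrable_absRadComplexity [DecidableEq ι] (hg : IsBoundedClass P g C) :
    Integrable (fun ω : ι → Ω ↦ absRadComplexity fun i t ↦ g t (ω i)) (.pi fun _ ↦ P) := by
  refine .of_bound hg.measurable_absRadComplexity.aestronglyMeasurable (Fintype.card ι * C) ?_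
  filter_upwards [ae_pi_forall_of_ae hg.ae_abs_le] with ω hω
  unfold absRadComplexity
  rw [Real.norm_of_nonneg (Finset.expect_nonneg fun _ _ ↦ Real.iSup_nonneg fun _ ↦ abs_nonneg _)]
  exact Finset.expect_le Finset.univ_nonempty fun e _ ↦ ciSup_le fun t ↦
    abs_sum_signs_smul_le (hω · t) e

lemma integral_ghostDeviation_one_le [DecidableEq ι] (hg : IsBoundedClass P g C) :
    ∫ z, ghostDeviation g 1 z ∂(Measure.pi fun _ : ι ↦ P.prod P) ≤
      2 * ∫ ω : ι → Ω, absRadComplexity (fun i t ↦ g t (ω i)) ∂(Measure.pi fun _ ↦ P) := by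
  let R (ω : ι → Ω) : ℝ := absRadComplexity fun i t ↦ g t (ω i)
  have fst := measurePreserving_pi (fun _ : ι ↦ P.prod P) (fun _ ↦ P) fun _ ↦ measurePreserving_fst
  have snd := measurePreserving_pi (fun _ : ι ↦ P.prod P) (fun _ ↦ P) fun _ ↦ measurePreserving_snd
  have int_R : Integrable R (.pi fun _ ↦ P) := hg.integrable_absRadComplexity
  have int_fst : Integrable (fun z : ι → Ω × Ω ↦ R fun i ↦ (z i).1) (.pi fun _ ↦ P.prod P) :=
    fst.integrable_comp_of_integrable int_R
  have int_snd : Integrable (fun z : ι → Ω × Ω ↦ R fun i ↦ (z i).2) (.pi fun _ ↦ P.prod P) :=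
    snd.integrable_comp_of_integrable int_R
  calc ∫ z, ghostDeviation g 1 z ∂(Measure.pi fun _ : ι ↦ P.prod P)
      = 𝔼 e : ι → ℤˣ, ∫ z, ghostDeviation g e z ∂(Measure.pi fun _ : ι ↦ P.prod P) := by
        simp only [hg.integral_ghostDeviation_eq_one, Fintype.expect_const]
    _ = ∫ z, 𝔼 e : ι → ℤˣ, ghostDeviation g e z ∂(Measure.pi fun _ : ι ↦ P.prod P) := by
        simp only [Fintype.expect_eq_sum_div_card, integral_div]
        rw [integral_finsetSum _ fun e _ ↦ hg.integrable_ghostDeviation e]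
    _ ≤ ∫ z, (R (fun i ↦ (z i).1) + R (fun i ↦ (z i).2)) ∂(Measure.pi fun _ : ι ↦ P.prod P) := by
        refine integral_mono_of_nonneg
          (.of_forall fun z ↦ Finset.expect_nonneg fun e _ ↦ ghostDeviation_nonneg g e z)
          (int_fst.add int_snd) ?_
        filter_upwards [hg.ae_pi_abs_le] with z hz
        exact expect_ghostDeviation_le hz
    _ = 2 * ∫ ω, R ω ∂(Measure.pi fun _ ↦ P) := by
        rw [integral_add int_fst int_snd, two_mul,
          integral_comp_of_measurePreserving fst int_R.aestronglyMeasurable,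
          integral_comp_of_measurePreserving snd int_R.aestronglyMeasurable]

theorem integral_iSup_abs_le_two_mul_integral_absRadComplexity [DecidableEq ι]
    (hg : IsBoundedClass P g C) :
    ∫ ω : ι → Ω, (⨆ t, |∑ i, (g t (ω i) - ∫ x, g t x ∂P)|) ∂(Measure.pi fun _ ↦ P) ≤
      2 * ∫ ω : ι → Ω, absRadComplexity (fun i t ↦ g t (ω i)) ∂(Measure.pi fun _ ↦ P) :=
  hg.integral_iSup_abs_le_integral_ghostDeviation.trans hg.integral_ghostDeviation_one_le

end IsBoundedClass

end Symmetrization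

section EmpiricalProcess

variable {T Ω : Type*} [TopologicalSpace T] [TopologicalSpace.SeparableSpace T] [Nonempty T]
  [MeasurableSpace Ω] {P : Measure Ω} [IsProbabilityMeasure P]

theorem IsBoundedClass.integral_iSup_abs_integral_sub_mean_le {g : T → Ω → ℝ} {C B : ℝ} {n : ℕ}
    (hg : IsBoundedClass P g C) (hn : 0 < n)
    (hB : ∀ᵐ ω ∂Measure.pi fun _ : Fin n ↦ P, absRadComplexity (fun i t ↦ g t (ω i)) ≤ B) :
    ∫ ω : Fin n → Ω, (⨆ t, |∫ x, g t x ∂P - (∑ i, g t (ω i)) / n|) ∂(Measure.pi fun _ ↦ P) ≤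
      2 * B / n := by
  have n_pos : (0 : ℝ) < n := Nat.cast_pos.2 hn
  have rescale (ω : Fin n → Ω) t : |∫ x, g t x ∂P - (∑ i, g t (ω i)) / n| =
      |∑ i, (g t (ω i) - ∫ x, g t x ∂P)| * (n : ℝ)⁻¹ := by
    have sum_eq : ∑ i, (g t (ω i) - ∫ x, g t x ∂P) =
        -(∫ x, g t x ∂P - (∑ i, g t (ω i)) / n) * n := by
      rw [Finset.sum_sub_distrib, Finset.sum_const, Finset.card_univ, Fintype.card_fin,
        nsmul_eq_mul]
      field_simp
      ring
    rw [sum_eq, abs_mul, abs_neg, abs_of_pos n_pos, mul_inv_cancel_right₀ n_pos.ne']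
  have mean_le : ∫ ω : Fin n → Ω, absRadComplexity (fun i t ↦ g t (ω i)) ∂(Measure.pi fun _ ↦ P) ≤
      B := by
    simpa using integral_mono_ae hg.integrable_absRadComplexity (integrable_const B) hB
  simp only [rescale, ← Real.iSup_mul_of_nonneg (inv_nonneg.2 n_pos.le), integral_mul_const]
  rw [div_eq_mul_inv]
  gcongr
  exact hg.integral_iSup_abs_le_two_mul_integral_absRadComplexity.trans (by gcongr)

end EmpiricalProcess

section QuantizationLoss

variable {E : Type*} [NormedAddCommGroup E] {k : ℕ}

lemma qgamma_sub_le (hk : 0 < k) (c c' : Fin k → E) (x : E) :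
    ∃ j, qgamma k c x - qgamma k c' x ≤ ‖x - c j‖ ^ 2 - ‖x - c' j‖ ^ 2 := by
  have : Nonempty (Fin k) := ⟨⟨0, hk⟩⟩
  obtain ⟨j, hj⟩ := exists_eq_ciInf_of_finite (f := fun j ↦ ‖x - c' j‖ ^ 2)
  exact ⟨j, sub_le_sub (ciInf_le (Set.finite_range _).bddBelow j) hj.le⟩

lemma continuous_qgamma {X : Type*} [TopologicalSpace X] {c : X → Fin k → E} {x : X → E}
    (hc : Continuous c) (hx : Continuous x) : Continuous fun s ↦ qgamma k (c s) (x s) := by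
  unfold qgamma
  rcases isEmpty_or_nonempty (Fin k) with _ | _
  · simp only [Real.iInf_of_isEmpty, continuous_const]
  · simp only [← Finset.inf'_univ_eq_ciInf]
    fun_prop

lemma abs_qgamma_sub_le {c c' : Fin k → E} {x : E} {M : ℝ} (hc : ∀ j, ‖c j‖ ≤ M)
    (hc' : ∀ j, ‖c' j‖ ≤ M) (hx : ‖x‖ ≤ M) : |qgamma k c x - qgamma k c' x| ≤ (2 * M) ^ 2 := by
  have nonneg (c : Fin k → E) : 0 ≤ qgamma k c x := Real.iInf_nonneg fun _ ↦ by positivity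
  have le {c : Fin k → E} (hc : ∀ j, ‖c j‖ ≤ M) : qgamma k c x ≤ (2 * M) ^ 2 := by
    rcases isEmpty_or_nonempty (Fin k) with _ | ⟨⟨j⟩⟩
    · rw [qgamma, Real.iInf_of_isEmpty]
      positivity
    · refine (ciInf_le (Set.finite_range _).bddBelow j).trans ?_
      gcongr
      linarith [norm_sub_le x (c j), hc j]
  exact abs_sub_le_of_nonneg_of_le (nonneg c) (le hc) (nonneg c') (le hc')

/-- The embedding `x ↦ (x, M)` of the sample space into the Hilbert space `E × ℝ`, in which
increments of squared distances are linear: see `inner_sampleFeature_codeFeature`. -/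
def sampleFeature (M : ℝ) (x : E) : WithLp 2 (E × ℝ) := WithLp.toLp 2 (x, M)

lemma norm_sampleFeature_sq_le {M : ℝ} {x : E} (hx : ‖x‖ ≤ M) :
    ‖sampleFeature M x‖ ^ 2 ≤ 2 * M ^ 2 := by
  have sq_le : ‖x‖ ^ 2 ≤ M ^ 2 := by gcongr
  calc ‖sampleFeature M x‖ ^ 2 = ‖x‖ ^ 2 + M ^ 2 := by
        simp [sampleFeature, WithLp.prod_norm_sq_eq_of_L2]
    _ ≤ 2 * M ^ 2 := by linarith

variable [InnerProductSpace ℝ E]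

/-- The vector of `E × ℝ` representing the increment `x ↦ ‖x - c‖² - ‖x - c'‖²`. -/
def codeFeature (M : ℝ) (c c' : E) : WithLp 2 (E × ℝ) :=
  WithLp.toLp 2 (-(2 : ℝ) • (c - c'), (‖c‖ ^ 2 - ‖c'‖ ^ 2) / M)

lemma inner_sampleFeature_codeFeature {M : ℝ} (hM : M ≠ 0) (x c c' : E) :
    ⟪sampleFeature M x, codeFeature M c c'⟫ = ‖x - c‖ ^ 2 - ‖x - c'‖ ^ 2 := by
  simp only [sampleFeature, codeFeature, WithLp.prod_inner_apply, real_inner_smul_right,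
    inner_sub_right, norm_sub_sq_real, conj_trivial, RCLike.inner_apply]
  field_simp
  ring

lemma norm_codeFeature_sq_le {M : ℝ} (hM : 0 < M) {c c' : E} (hc : ‖c‖ ≤ M) (hc' : ‖c'‖ ≤ M) :
    ‖codeFeature M c c'‖ ^ 2 ≤ 8 * ‖c - c'‖ ^ 2 := by
  have norm_sq_sub : |‖c‖ ^ 2 - ‖c'‖ ^ 2| / M ≤ 2 * ‖c - c'‖ := by
    rw [sq_sub_sq, abs_mul, abs_of_nonneg (by positivity), div_le_iff₀ hM]
    calc (‖c‖ + ‖c'‖) * |‖c‖ - ‖c'‖| ≤ (M + M) * ‖c - c'‖ := by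
          gcongr
          exact abs_norm_sub_norm_le c c'
      _ = 2 * ‖c - c'‖ * M := by ring
  calc ‖codeFeature M c c'‖ ^ 2 = (2 * ‖c - c'‖) ^ 2 + (|‖c‖ ^ 2 - ‖c'‖ ^ 2| / M) ^ 2 := by
        simp [codeFeature, WithLp.prod_norm_sq_eq_of_L2, norm_smul, div_pow]
    _ ≤ (2 * ‖c - c'‖) ^ 2 + (2 * ‖c - c'‖) ^ 2 := by gcongr
    _ = 8 * ‖c - c'‖ ^ 2 := by ring

variable {T : Type*} [Nonempty T] {c : T → Fin k → E} {cs : Fin k → E} {M r : ℝ}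

lemma radComplexity_qgamma_sub_le (hk : 0 < k) (hM : 0 < M) {n : ℕ} {x : Fin n → E}
    (hx : ∀ i, ‖x i‖ ≤ M) (hc : ∀ t j, ‖c t j‖ ≤ M) (hcs : ∀ j, ‖cs j‖ ≤ M)
    (hr : ∀ t, ∑ j, ‖c t j - cs j‖ ^ 2 ≤ r) :
    radComplexity (fun i t ↦ qgamma k (c t) (x i) - qgamma k cs (x i)) ≤
      4 * M * √(k * n * r) := by
  have sum_norm_code t : ∑ j, ‖codeFeature M (c t j) (cs j)‖ ^ 2 ≤ 8 * r :=
    calc ∑ j, ‖codeFeature M (c t j) (cs j)‖ ^ 2 ≤ ∑ j, 8 * ‖c t j - cs j‖ ^ 2 :=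
          Finset.sum_le_sum fun j _ ↦ norm_codeFeature_sq_le hM (hc t j) (hcs j)
      _ ≤ 8 * r := by rw [← Finset.mul_sum]; linarith [hr t]
  have sum_norm_sample : ∑ i, ‖sampleFeature M (x i)‖ ^ 2 ≤ n * (2 * M ^ 2) := by
    simpa using Finset.sum_le_card_nsmul Finset.univ _ _
      fun i _ ↦ norm_sampleFeature_sq_le (hx i)
  have r_nonneg : 0 ≤ r :=
    (Finset.sum_nonneg fun _ _ ↦ sq_nonneg _).trans (hr (Classical.arbitrary T))
  calc radComplexity (fun i t ↦ qgamma k (c t) (x i) - qgamma k cs (x i))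
      ≤ √(8 * r) * √(Fintype.card (Fin k) * ∑ i, ‖sampleFeature M (x i)‖ ^ 2) := by
        refine radComplexity_le_of_sub_le_abs_inner _ _ sum_norm_code fun i t t' ↦ ?_
        obtain ⟨j, hj⟩ := qgamma_sub_le hk (c t) (c t') (x i)
        refine ⟨j, le_trans ?_ (le_abs_self _)⟩
        simp only [inner_sampleFeature_codeFeature hM.ne']
        linarith
    _ ≤ √(8 * r) * √(k * (n * (2 * M ^ 2))) := by
        rw [Fintype.card_fin]
        gcongr
    _ = √((4 * M) ^ 2 * (k * n * r)) := by
        rw [← Real.sqrt_mul (by positivity)]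
        ring_nf
    _ = 4 * M * √(k * n * r) := by
        rw [Real.sqrt_mul (by positivity), Real.sqrt_sq (by positivity)]

lemma absRadComplexity_qgamma_sub_le (hk : 0 < k) (hM : 0 < M) {n : ℕ} {x : Fin n → E}
    (hx : ∀ i, ‖x i‖ ≤ M) (hc : ∀ t j, ‖c t j‖ ≤ M) (hr : ∀ t, ∑ j, ‖c t j - cs j‖ ^ 2 ≤ r)
    {t₀ : T} (ht₀ : c t₀ = cs) :
    absRadComplexity (fun i t ↦ qgamma k (c t) (x i) - qgamma k cs (x i)) ≤
      8 * M * √(k * n * r) := by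
  have hcs : ∀ j, ‖cs j‖ ≤ M := ht₀ ▸ hc t₀
  have bdd (e : Fin n → ℤˣ) :
      BddAbove (Set.range fun t ↦ ∑ i, e i • (qgamma k (c t) (x i) - qgamma k cs (x i))) :=
    ⟨_, Set.forall_mem_range.2 fun t ↦ (le_abs_self _).trans <|
      abs_sum_signs_smul_le (fun i ↦ abs_qgamma_sub_le (hc t) hcs (hx i)) e⟩
  linarith [absRadComplexity_le_two_mul bdd (t₀ := t₀) fun i ↦ by rw [ht₀, sub_self],
    radComplexity_qgamma_sub_le hk hM hx hc hcs hr]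

end QuantizationLoss

section LocalizedDeviation

variable {E T : Type*} [NormedAddCommGroup E] [MeasurableSpace E] [TopologicalSpace T]
  {k : ℕ} {P : Measure E} {M : ℝ} {c : T → Fin k → E} {cs : Fin k → E}

lemma ae_norm_le_of_mbounded (hbd : mbounded P M) : ∀ᵐ x ∂P, ‖x‖ ≤ M :=
  measure_mono_null (fun x hx ↦ by simpa using hx) hbd

variable [OpensMeasurableSpace E]

lemma isBoundedClass_qgamma_sub (hbd : mbounded P M) (hcont : Continuous c)
    (hc : ∀ t j, ‖c t j‖ ≤ M) (hcs : ∀ j, ‖cs j‖ ≤ M) :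
    IsBoundedClass P (fun t x ↦ qgamma k (c t) x - qgamma k cs x) ((2 * M) ^ 2) where
  continuous_index _ := (continuous_qgamma hcont continuous_const).sub continuous_const
  measurable _ := ((continuous_qgamma continuous_const continuous_id).sub
    (continuous_qgamma continuous_const continuous_id)).measurable
  ae_abs_le := (ae_norm_le_of_mbounded hbd).mono fun _ hx t ↦ abs_qgamma_sub_le (hc t) hcs hx

theorem integral_iSup_abs_integral_qgamma_sub_mean_le [InnerProductSpace ℝ E]
    [TopologicalSpace.SeparableSpace T] [IsProbabilityMeasure P] (hk : 0 < k) (hM : 0 < M)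
    (hbd : mbounded P M) (hcont : Continuous c) (hc : ∀ t j, ‖c t j‖ ≤ M) {r : ℝ}
    (hr : ∀ t, ∑ j, ‖c t j - cs j‖ ^ 2 ≤ r) {t₀ : T} (ht₀ : c t₀ = cs) {n : ℕ} (hn : 0 < n) :
    ∫ ω : Fin n → E, (⨆ t, |∫ x, (qgamma k (c t) x - qgamma k cs x) ∂P -
        (∑ i, (qgamma k (c t) (ω i) - qgamma k cs (ω i))) / n|) ∂(Measure.pi fun _ ↦ P) ≤
      16 * M * √(k * r) / √n := by
  have : Nonempty T := ⟨t₀⟩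
  have hcs : ∀ j, ‖cs j‖ ≤ M := ht₀ ▸ hc t₀
  refine ((isBoundedClass_qgamma_sub hbd hcont hc hcs).integral_iSup_abs_integral_sub_mean_le hn
    (B := 8 * M * √(k * n * r)) ?_).trans_eq ?_
  · filter_upwards [ae_pi_forall_of_ae (ae_norm_le_of_mbounded hbd)] with ω hω
    exact absRadComplexity_qgamma_sub_le hk hM hω hc hr ht₀
  · calc 2 * (8 * M * √(k * n * r)) / n = 16 * M * √(k * r) * (√n / n) := by
          rw [mul_right_comm (k : ℝ), Real.sqrt_mul' _ n.cast_nonneg]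
          ring
      _ = 16 * M * √(k * r) / √n := by rw [Real.sqrt_div_self, div_eq_mul_inv]

end LocalizedDeviation

theorem stmt19_general [OpensMeasurableSpace H] [SecondCountableTopology H]
    (k : ℕ) (hk : 0 < k) (P : Measure H) [IsProbabilityMeasure P]
    (M : ℝ) (hM : 0 < M) (hbd : mbounded P M)
    (cs : Fin k → H) (hcsball : ∀ i, ‖cs i‖ ≤ M) (n : ℕ) (hn : 0 < n) (δ : ℝ) (hδ : 0 ≤ δ) :
    (∫ ω : Fin n → H,
        (⨆ c : {c : Fin k → H //
            (∀ i, ‖c i‖ ≤ M) ∧ ∑ i, ‖c i - cs i‖ ^ 2 ≤ δ / (16 * M ^ 2)},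
          |(∫ x, (qgamma k c.1 x - qgamma k cs x) ∂P) -
            (∑ j, (qgamma k c.1 (ω j) - qgamma k cs (ω j))) / n|)
      ∂(Measure.pi fun _ : Fin n => P)) ≤
      4 * √(k * δ) / √n := by
  have cs_mem : ∑ i, ‖cs i - cs i‖ ^ 2 ≤ δ / (16 * M ^ 2) := by
    simp only [sub_self, norm_zero, zero_pow two_ne_zero, Finset.sum_const_zero]
    positivity
  have sqrt_eq : √(k * (δ / (16 * M ^ 2))) = √(k * δ) / (4 * M) := by
    rw [← mul_div_assoc, Real.sqrt_div' _ (by positivity),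
      show 16 * M ^ 2 = (4 * M) ^ 2 by ring, Real.sqrt_sq (by positivity)]
  refine (integral_iSup_abs_integral_qgamma_sub_mean_le hk hM hbd continuous_subtype_val
    (fun c ↦ c.2.1) (fun c ↦ c.2.2) (t₀ := ⟨cs, hcsball, cs_mem⟩) rfl hn).trans_eq ?_
  rw [sqrt_eq]
  field_simp
  ring

/-- Equation (4.10): localized complexity bound around a fixed optimal codebook:
`E sup_{‖c−c*‖² ≤ δ/(16M²)} |(P−P_n)(γ(c,·)−γ(c*,·))| ≤ 4√(πkδ)/√n`. -/
theorem stmt19 [BorelSpace H] [SecondCountableTopology H] [CompleteSpace H]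
    (k : ℕ) (hk : 2 ≤ k) (P : Measure H) [IsProbabilityMeasure P]
    (M : ℝ) (hM : 0 < M) (hbd : mbounded P M) (hsupp : suppGT P k)
    -- `cs` is a fixed optimal codebook, minimizing the risk over `B(0,M)^k`
    (cs : Fin k → H) (hcsball : ∀ i, ‖cs i‖ ≤ M)
    (hcsopt : ∀ c : Fin k → H, (∀ i, ‖c i‖ ≤ M) → qrisk k P cs ≤ qrisk k P c)
    (n : ℕ) (hn : 0 < n) (δ : ℝ) (hδ : 0 < δ) :
    (∫ ω : Fin n → H,
        (⨆ c : {c : Fin k → H //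
            (∀ i, ‖c i‖ ≤ M) ∧ ∑ i, ‖c i - cs i‖ ^ 2 ≤ δ / (16 * M ^ 2)},
          |(∫ x, (qgamma k c.1 x - qgamma k cs x) ∂P) -
            (∑ j, (qgamma k c.1 (ω j) - qgamma k cs (ω j))) / n|)
      ∂(Measure.pi fun _ : Fin n => P)) ≤
      4 * Real.sqrt (Real.pi * k * δ) / Real.sqrt n := by
  calc _ ≤ 4 * √(k * δ) / √n := stmt19_general k (by lia) P M hM hbd cs hcsball n hn δ hδ.le
    _ ≤ 4 * √(Real.pi * k * δ) / √n := by
        gcongr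
        exact le_mul_of_one_le_left k.cast_nonneg (by linarith [Real.pi_gt_three])

end
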